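/- Let V be a type, w : V → V → ℝ≥0∞ a weight function, T ⊆ V, s ∈ T, δ : V → ℝ≥0∞ with δ(s) = 0, and let w' be the contraction of T onto s. Fix vertices r ∉ T and v ∉ T, and suppose there exist a vertex u ∈ T, a vertex y ∉ T, and walks A, B, C such that: A is a walk from r to s none of whose vertices lies in T∖{s}; B is a walk from s to u all of whose vertices lie in T and δ(u) ≤ weight(B); C is a walk from y to v none of whose vertices lies in T; and weight(A) + weight(B) + w(u,y) + weight(C) = d_w(r,v). Then d_{w'}(r,v) ≤ d_w(r,v). (This is the 'distances have not increased' direction of Corollary 4.4 of the paper, whose decomposition hypothesis is supplied there by Lemma 4.3.) -/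

import Mathlib

/-!
Fix `v` and consider the potential `f x = wDist w' x v`, where `w'` is the contracted weight. It
satisfies `f x ≤ w' x y + f y` (`wDist_le_add`), so along a walk whose edges have the same weight
in `w` and `w'` it drops by at most the `w`-weight of the walk. The edges of `A` out of vertices
other than `s` and all edges of `C` are of this kind; `A` may pass through `s` before its end, but
the bound is already reached at the first visit to `s` (`le_walkWeight_add`). The segment `B`
followed by the edge `(u, y)` is replaced by the single edge `(s, y)`, with
`w' s y ≤ δ u + w u y ≤ walkWeight w B + w u y`.
-/

open scoped ENNReal

/-- A walk from `u` to `v`: a nonempty list with head `u` and last element `v`. -/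
def IsWalk {V : Type*} (p : List V) (u v : V) : Prop :=
  p ≠ [] ∧ p.head? = some u ∧ p.getLast? = some v

/-- The weight of a walk: the sum of `w x y` over consecutive pairs of the list. -/
noncomputable def walkWeight {V : Type*} (w : V → V → ℝ≥0∞) (p : List V) : ℝ≥0∞ :=
  ((p.zip p.tail).map fun e => w e.1 e.2).sum

/-- The distance from `u` to `v`: the infimum of the weights of walks from `u` to `v`. -/
noncomputable def wDist {V : Type*} (w : V → V → ℝ≥0∞) (u v : V) : ℝ≥0∞ :=
  ⨅ (p : List V) (_ : IsWalk p u v), walkWeight w p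

/- `contractW w T s δ` is the contraction of `T` onto `s ∈ T`, with offsets `δ`. -/
open Classical in
noncomputable def contractW {V : Type*} (w : V → V → ℝ≥0∞) (T : Set V) (s : V)
    (δ : V → ℝ≥0∞) : V → V → ℝ≥0∞ := fun x y =>
  if x ∈ T \ {s} ∨ y ∈ T \ {s} ∨ (x = s ∧ y = s) then ∞
  else if x = s then ⨅ u ∈ T, (δ u + w u y)
  else w x y

lemma walkWeight_cons_cons {V : Type*} (w : V → V → ℝ≥0∞) (a b : V) (p : List V) :
    walkWeight w (a :: b :: p) = w a b + walkWeight w (b :: p) := by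
  simp [walkWeight]

lemma wDist_self {V : Type*} (w : V → V → ℝ≥0∞) (v : V) : wDist w v v = 0 := by
  refine le_antisymm ?_ zero_le
  exact (iInf₂_le [v] (by simp [IsWalk])).trans (by simp [walkWeight])

lemma wDist_le_add {V : Type*} (w : V → V → ℝ≥0∞) (a b v : V) :
    wDist w a v ≤ w a b + wDist w b v := by
  conv_rhs => rw [wDist]
  simp only [ENNReal.add_iInf]
  refine le_iInf fun p => ?_
  by_cases hp : IsWalk p b v
  · simp only [hp, iInf_pos]
    obtain ⟨hne, hh, hl⟩ := hp
    cases p with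
    | nil => exact absurd rfl hne
    | cons c q =>
      obtain rfl : c = b := by simpa using hh
      rw [← walkWeight_cons_cons]
      exact iInf₂_le (a :: c :: q) ⟨by simp, by simp, by simpa using hl⟩
  · simp [hp]

/-- The potential inequality is only needed at vertices other than the endpoint `t`: a walk that
reaches `t` early already satisfies the bound there. -/
lemma le_walkWeight_add {V : Type*} (w : V → V → ℝ≥0∞) (f : V → ℝ≥0∞) (P : Set V) (t : V)
    (hf : ∀ x ∈ P, ∀ y ∈ P, x ≠ t → f x ≤ w x y + f y) (p : List V) :
    ∀ a, IsWalk p a t → (∀ z ∈ p, z ∈ P) → f a ≤ walkWeight w p + f t := by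
  induction p with
  | nil => exact fun a h => absurd rfl h.1
  | cons c q ih =>
    rintro a ⟨-, hh, hl⟩ hP
    obtain rfl : c = a := by simpa using hh
    by_cases hct : c = t
    · exact hct ▸ le_add_self
    cases q with
    | nil => exact absurd (by simpa using hl) hct
    | cons b q =>
      rw [walkWeight_cons_cons, add_assoc]
      refine (hf c (hP c (by simp)) b (hP b (by simp)) hct).trans ?_
      gcongr
      exact ih b ⟨by simp, by simp, by simpa using hl⟩
        fun z hz => hP z (List.mem_cons_of_mem _ hz)

/-- If the shortest `r`-to-`v` distance is realized by a walk decomposing as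
`A` (to `s`, avoiding `T \ {s}`), `B` (inside `T`, from `s` to `u`, with
`δ u ≤ weight B`), the edge `(u, y)`, and `C` (avoiding `T`), then contracting
`T` onto `s` does not increase the distance from `r` to `v`. -/
theorem contraction_not_increase_dist {V : Type*} (w : V → V → ℝ≥0∞)
    (T : Set V) (s : V) (hs : s ∈ T) (δ : V → ℝ≥0∞) (hδs : δ s = 0)
    (r v : V) (hr : r ∉ T) (hv : v ∉ T)
    (hdecomp : ∃ u ∈ T, ∃ y ∉ T, ∃ A B C : List V,
      IsWalk A r s ∧ (∀ z ∈ A, z ∉ T \ {s}) ∧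
      IsWalk B s u ∧ (∀ z ∈ B, z ∈ T) ∧ δ u ≤ walkWeight w B ∧
      IsWalk C y v ∧ (∀ z ∈ C, z ∉ T) ∧
      walkWeight w A + walkWeight w B + w u y + walkWeight w C = wDist w r v) :
    wDist (contractW w T s δ) r v ≤ wDist w r v := by
  obtain ⟨u, hu, y, hy, A, B, C, hA, hAT, -, -, hδ, hC, hCT, hsum⟩ := hdecomp
  have hedge : ∀ x ∉ T \ {s}, ∀ z ∉ T \ {s}, x ≠ s → contractW w T s δ x z = w x z := by
    intro x hx z hz hxs
    simp only [contractW, hx, hz, hxs, false_and, or_false, if_false]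
  have hAle := le_walkWeight_add w (fun x => wDist (contractW w T s δ) x v) (T \ {s})ᶜ s
    (fun x hx z hz hxs => hedge x hx z hz hxs ▸ wDist_le_add _ x z v) A r hA hAT
  have hCle := le_walkWeight_add w (fun x => wDist (contractW w T s δ) x v) Tᶜ v
    (fun x hx z hz _ => hedge x (fun h => hx h.1) z (fun h => hz h.1)
      (fun h => hx (h ▸ hs)) ▸ wDist_le_add _ x z v) C y hC hCT
  have hsy : contractW w T s δ s y ≤ δ u + w u y := by
    have hys : y ≠ s := fun h => hy (h ▸ hs)
    simp only [contractW, Set.mem_sdiff, Set.mem_singleton_iff, hy, hys, not_true_eq_false,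
      and_false, false_and, or_false, if_false, if_true]
    exact iInf₂_le u hu
  simp only [wDist_self, add_zero] at hAle hCle
  calc wDist (contractW w T s δ) r v
      ≤ walkWeight w A + wDist (contractW w T s δ) s v := hAle
    _ ≤ walkWeight w A + (contractW w T s δ s y + wDist (contractW w T s δ) y v) := by
        gcongr; exact wDist_le_add _ s y v
    _ ≤ walkWeight w A + ((walkWeight w B + w u y) + walkWeight w C) := by
        gcongr; exact hsy.trans (by gcongr)
    _ = wDist w r v := by rw [← hsum]; ring
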